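/- arXiv:2206.14345 — 3 statements merged into one kernel-verified Lean document; each statement's English description precedes it below -/
import Mathlib

section
/- Let K = ℚ(θ) where θ is a root of the irreducible polynomial F(x) = x^7 + a x^5 + b with a ≡ 3 (mod 8) and b ≡ 4 (mod 8). Then 2 divides the index (A_K : ℤ[η]) for every η ∈ A_K generating K, and hence K is not monogenic. -/
open NumberField Polynomial

lemma C9_aux_index {R : Type*} [CommRing R] (f g : R →+* ZMod 2) (hfg : f ≠ g) (η : R)
    (h : f η = g η) : 2 ∣ (Algebra.adjoin ℤ {η}).toSubring.toAddSubgroup.index := by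
  let d : R →+ ZMod 2 := f.toAddMonoidHom - g.toAddMonoidHom
  have hle : (Algebra.adjoin ℤ {η}).toSubring.toAddSubgroup ≤ d.ker := by
    intro x hx
    have hx' : x ∈ Algebra.adjoin ℤ {η} := hx
    have : Algebra.adjoin ℤ {η} ≤ AlgHom.equalizer f.toIntAlgHom g.toIntAlgHom := by
      rw [Algebra.adjoin_le_iff]
      intro y hy
      rw [Set.mem_singleton_iff] at hy
      subst hy
      exact h
    have h2 : f x = g x := this hx'
    rw [AddMonoidHom.mem_ker]
    change f x - g x = 0
    rw [h2, sub_self]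
  refine dvd_trans ?_ (AddSubgroup.index_dvd_of_le hle)
  rw [AddSubgroup.index_ker]
  have hd : ∃ x, f x ≠ g x := by
    by_contra! hc
    exact hfg (RingHom.ext hc)
  obtain ⟨x, hx⟩ := hd
  have hdiv : Nat.card d.range ∣ 2 := by
    have := AddSubgroup.card_addSubgroup_dvd_card d.range
    rwa [Nat.card_zmod] at this
  rcases (Nat.dvd_prime Nat.prime_two).1 hdiv with h1 | h1
  · exfalso
    have := (AddSubgroup.card_eq_one).1 h1
    have h3 : d x ∈ d.range := ⟨x, rfl⟩
    rw [this, AddSubgroup.mem_bot] at h3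
    exact hx (sub_eq_zero.1 h3)
  · rw [h1]

lemma C9_aux_main {R : Type*} [CommRing R] (f g h : R →+* ZMod 2) (hfg : f ≠ g) (hfh : f ≠ h)
    (hgh : g ≠ h) (η : R) : 2 ∣ (Algebra.adjoin ℤ {η}).toSubring.toAddSubgroup.index := by
  have key : ∀ a b c : ZMod 2, a = b ∨ a = c ∨ b = c := by decide
  rcases key (f η) (g η) (h η) with h1 | h1 | h1
  · exact C9_aux_index f g hfg η h1
  · exact C9_aux_index f h hfh η h1
  · exact C9_aux_index g h hgh η h1

/-- Hensel lifting of `s = ±1`. -/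
lemma C9_aux_hensel (a b s : ℤ) (ha : a ≡ 3 [ZMOD 8]) (hb : b ≡ 4 [ZMOD 8])
    (hs : s = 1 ∨ s = -1) :
    ∃ z : ℤ_[2], z ^ 7 + a * z ^ 5 + b = 0 ∧ ∃ t, z = s + 4 * t := by
  have ha' := ha.dvd
  have hb' := hb.dvd
  have hd : ∃ k : ℤ, 7 * s ^ 6 + a * (5 * s ^ 4) = 2 * (2 * k + 1) := by
    obtain ⟨m, hm⟩ := ha'
    refine ⟨5 - 10 * m, ?_⟩
    rcases hs with rfl | rfl <;> norm_num <;> linarith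
  have h8 : (2 : ℤ) ^ 3 ∣ s ^ 7 + a * s ^ 5 + b := by
    rcases hs with rfl | rfl <;> norm_num <;> omega
  obtain ⟨k, hk⟩ := hd
  let F : ℤ[X] := X ^ 7 + C a * X ^ 5 + C b
  have e1 : F.aeval (s : ℤ_[2]) = ((s ^ 7 + a * s ^ 5 + b : ℤ) : ℤ_[2]) := by
    simp [F]
  have e2 : F.derivative.aeval (s : ℤ_[2]) = ((2 * (2 * k + 1) : ℤ) : ℤ_[2]) := by
    rw [← hk]; simp [F, map_ofNat]
  have n1 : ‖F.aeval (s : ℤ_[2])‖ ≤ 1 / 8 := by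
    rw [e1]
    have := (PadicInt.norm_int_le_pow_iff_dvd (p := 2) (n := 3)).2 (by exact_mod_cast h8)
    refine this.trans ?_
    norm_num
  have n2 : ‖F.derivative.aeval (s : ℤ_[2])‖ = 1 / 2 := by
    rw [e2, Int.cast_mul, norm_mul]
    have h1 : ‖((2 * k + 1 : ℤ) : ℤ_[2])‖ = 1 := by
      apply le_antisymm (PadicInt.norm_le_one _)
      by_contra hc
      have := (PadicInt.norm_int_lt_one_iff_dvd (p := 2) _).1 (not_le.1 hc)
      push_cast at this
      omega
    rw [h1]
    have := PadicInt.norm_p (p := 2)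
    push_cast at this ⊢
    rw [this]; norm_num
  obtain ⟨z, hz, hz2, -⟩ := hensels_lemma (F := F) (a := (s : ℤ_[2])) (by rw [n2]; linarith)
  refine ⟨z, ?_, ?_⟩
  · simpa [F] using hz
  · rw [n2] at hz2
    have h3 := (PadicInt.norm_lt_pow_iff_norm_le_pow_sub_one (p := 2) (z - s) (-1)).1
      (by norm_num at hz2 ⊢; exact hz2)
    have h4 := (PadicInt.norm_le_pow_iff_mem_span_pow (p := 2) (z - s) 2).1
      (by norm_num at h3 ⊢; exact h3)
    rw [Ideal.mem_span_singleton] at h4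
    obtain ⟨t, ht⟩ := h4
    refine ⟨t, ?_⟩
    push_cast at ht
    linear_combination ht

lemma C9_aux_minpoly (a b : ℤ)
    (hirr : Irreducible (X ^ 7 + C (a : ℚ) * X ^ 5 + C (b : ℚ)))
    (K : Type*) [Field K] [NumberField K] (θ : K)
    (hroot : θ ^ 7 + (a : K) * θ ^ 5 + (b : K) = 0) :
    minpoly ℚ θ = X ^ 7 + C (a : ℚ) * X ^ 5 + C (b : ℚ) := by
  symm
  apply minpoly.eq_of_irreducible_of_monic hirr
  · simpa using hroot
  · monicity!

lemma C9_aux_hom (a b : ℤ)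
    (hirr : Irreducible (X ^ 7 + C (a : ℚ) * X ^ 5 + C (b : ℚ)))
    (K : Type*) [Field K] [NumberField K] (θ : K)
    (hroot : θ ^ 7 + (a : K) * θ ^ 5 + (b : K) = 0)
    (hgen : Algebra.adjoin ℚ {θ} = ⊤) (z : ℤ_[2]) (hz : z ^ 7 + a * z ^ 5 + b = 0)
    (t : 𝓞 K) (ht : (t : K) = θ) :
    ∃ f : 𝓞 K →+* ℤ_[2], f t = z := by
  have hint : IsIntegral ℚ θ := Algebra.IsIntegral.isIntegral θ
  let pb := PowerBasis.ofAdjoinEqTop hint hgen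
  have hpb : pb.gen = θ := PowerBasis.ofAdjoinEqTop_gen hint hgen
  have hz' : aeval (z : ℚ_[2]) (minpoly ℚ pb.gen) = 0 := by
    rw [hpb, C9_aux_minpoly a b hirr K θ hroot]
    have := congrArg (fun x : ℤ_[2] => (x : ℚ_[2])) hz
    simpa using this
  let φ : K →ₐ[ℚ] ℚ_[2] := pb.lift z hz'
  have hφ : φ θ = z := by
    have := pb.lift_gen _ hz'
    rwa [hpb] at this
  let ψ : 𝓞 K →+* ℚ_[2] := φ.toRingHom.comp (algebraMap (𝓞 K) K)
  have hψ : ∀ x, ψ x ∈ PadicInt.subring 2 := by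
    intro x
    have h1 : IsIntegral ℤ (ψ x) := (Algebra.IsIntegral.isIntegral (R := ℤ) x).map ψ.toIntAlgHom
    have h2 : IsIntegral ℤ_[2] (ψ x) := h1.tower_top
    obtain ⟨y, hy⟩ := IsIntegrallyClosed.isIntegral_iff.1 h2
    rw [← hy]
    exact y.2
  refine ⟨ψ.codRestrict (PadicInt.subring 2) hψ, ?_⟩
  apply Subtype.ext
  change φ (t : K) = z
  rw [ht, hφ]

lemma C9_aux_third (a b : ℤ) (ha : a ≡ 3 [ZMOD 8]) (hb : b ≡ 4 [ZMOD 8])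
    (hirr : Irreducible (X ^ 7 + C (a : ℚ) * X ^ 5 + C (b : ℚ)))
    (K : Type*) [Field K] [NumberField K] (θ : K)
    (hroot : θ ^ 7 + (a : K) * θ ^ 5 + (b : K) = 0)
    (hgen : Algebra.adjoin ℚ {θ} = ⊤) 
    (t : 𝓞 K) (ht : (t : K) = θ) :
    ∃ f : 𝓞 K →+* ZMod 2, f t = 0 := by
  have hint : IsIntegral ℚ θ := Algebra.IsIntegral.isIntegral θ
  have hnorm : (Ideal.absNorm (Ideal.span {t})) = b.natAbs := by
    rw [Ideal.absNorm_span_singleton]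
    let pb := PowerBasis.ofAdjoinEqTop hint hgen
    have hpb : pb.gen = θ := PowerBasis.ofAdjoinEqTop_gen hint hgen
    have h1 := Algebra.PowerBasis.norm_gen_eq_coeff_zero_minpoly pb
    rw [hpb, C9_aux_minpoly a b hirr K θ hroot, ← ht, ← Algebra.coe_norm_int] at h1
    simp only [coeff_add, coeff_X_pow, coeff_C_mul, coeff_C_zero] at h1
    norm_num at h1
    have h2 : Algebra.norm ℤ t = (-1) ^ pb.dim * b := by exact_mod_cast h1
    rw [h2, Int.natAbs_mul, Int.natAbs_pow]
    simp
  have hb4 : ∃ c : ℤ, b = 4 * (2 * c + 1) := by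
    obtain ⟨m, hm⟩ := hb.dvd
    exact ⟨-m, by linarith⟩
  obtain ⟨c, hc⟩ := hb4
  have hodd : ∃ k, a = 2 * k + 1 := by
    obtain ⟨m, hm⟩ := ha.dvd
    exact ⟨1 - 4 * m, by linarith⟩
  obtain ⟨k, hk⟩ := hodd
  obtain ⟨P, hPmax, hPu, hPd⟩ := Ideal.exists_isMaximal_dvd_of_dvd_absNorm
    (p := 2) Int.prime_two (Ideal.span {t}) (by rw [hnorm]; omega)
  have h2P : (2 : 𝓞 K) ∈ P := by
    have : (2 : ℤ) ∈ P.under ℤ := by rw [hPu]; exact Ideal.mem_span_singleton_self _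
    simpa [Ideal.under, Ideal.mem_comap] using this
  have h1P : (1 : 𝓞 K) ∉ P := fun h => hPmax.ne_top ((Ideal.eq_top_iff_one P).2 h)
  have htP : t ∈ P := by
    rwa [Ideal.dvd_span_singleton] at hPd
  have hP0 : P ≠ ⊥ := by
    rintro rfl
    rw [Ideal.mem_bot] at h2P
    exact two_ne_zero h2P
  have hPp : Prime P := (Ideal.prime_iff_isPrime hP0).2 hPmax.isPrime
  have hrel : t ^ 5 * (t ^ 2 + a) = 2 ^ 2 * (-(2 * c + 1)) := by
    apply RingOfIntegers.coe_injective
    have : (b : K) = 4 * (2 * c + 1) := by rw [hc]; push_cast; ring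
    simp only [map_mul, map_add, map_pow, map_neg, map_one, map_ofNat, map_intCast]
    rw [show algebraMap (𝓞 K) K t = θ from ht]
    linear_combination hroot - this
  have hu1 : ¬ P ∣ Ideal.span {t ^ 2 + (a : 𝓞 K)} := by
    rw [Ideal.dvd_span_singleton]
    intro h
    apply h1P
    have e : (1 : 𝓞 K) = (t ^ 2 + a) - t * t - 2 * k := by rw [hk]; push_cast; ring
    rw [e]
    exact P.sub_mem (P.sub_mem h (P.mul_mem_left _ htP)) (P.mul_mem_right _ h2P)
  have hu2 : ¬ P ∣ Ideal.span {(-(2 * c + 1) : 𝓞 K)} := by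
    rw [Ideal.dvd_span_singleton]
    intro h
    apply h1P
    have e : (1 : 𝓞 K) = -(-(2 * c + 1)) - 2 * c := by ring
    rw [e]
    exact P.sub_mem (P.neg_mem h) (P.mul_mem_right _ h2P)
  have ht0 : t ≠ 0 := by
    rintro rfl
    simp at hnorm
    omega
  have hem := congrArg (fun x => emultiplicity P (Ideal.span {x})) hrel
  simp only [← Ideal.span_singleton_mul_span_singleton, ← Ideal.span_singleton_pow,
    emultiplicity_mul hPp, emultiplicity_pow hPp, emultiplicity_eq_zero.2 hu1,
    emultiplicity_eq_zero.2 hu2, add_zero] at hem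
  have f1 : FiniteMultiplicity P (Ideal.span {t}) :=
    FiniteMultiplicity.of_prime_left hPp (by simpa using ht0)
  have f2 : FiniteMultiplicity P (Ideal.span {(2 : 𝓞 K)}) :=
    FiniteMultiplicity.of_prime_left hPp (by simp)
  rw [f1.emultiplicity_eq_multiplicity, f2.emultiplicity_eq_multiplicity] at hem
  have hem' : 5 * multiplicity P (Ideal.span {t}) = 2 * multiplicity P (Ideal.span {(2 : 𝓞 K)}) := by
    exact_mod_cast hem
  have hpos : multiplicity P (Ideal.span {t}) ≠ 0 := by
    intro h
    have := f1.emultiplicity_eq_multiplicity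
    rw [h] at this
    exact (emultiplicity_eq_zero.1 (by simpa using this)) hPd
  have hsq : P ^ 2 ∣ Ideal.span {t} := by
    rw [f1.pow_dvd_iff_le_multiplicity]
    omega
  have hN : Ideal.absNorm P ^ 2 ∣ b.natAbs := by
    rw [← hnorm, ← map_pow]
    exact Ideal.absNorm_dvd_absNorm_of_le (Ideal.le_of_dvd hsq)
  have hN2 : ∃ n, Ideal.absNorm P = 2 ^ n := by
    have h1 : Ideal.absNorm P ∣ Ideal.absNorm (Ideal.span {(2 : 𝓞 K)}) :=
      Ideal.absNorm_dvd_absNorm_of_le ((Ideal.span_singleton_le_iff_mem _).2 h2P)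
    have h2 : Algebra.norm ℤ (2 : 𝓞 K) = 2 ^ Module.finrank ℤ (𝓞 K) := by
      have := Algebra.norm_algebraMap_of_basis (Module.Free.chooseBasis ℤ (𝓞 K)) (2 : ℤ)
      rw [Module.finrank_eq_card_chooseBasisIndex]
      simpa using this
    rw [Ideal.absNorm_span_singleton, h2, Int.natAbs_pow] at h1
    obtain ⟨n, -, hn⟩ := (Nat.dvd_prime_pow Nat.prime_two).1 h1
    exact ⟨n, hn⟩
  obtain ⟨n, hn⟩ := hN2
  have hcard : Ideal.absNorm P = 2 := by
    match n, hn with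
    | 0, hn => exact absurd (Ideal.absNorm_eq_one_iff.1 (by simpa using hn)) hPmax.ne_top
    | 1, hn => simpa using hn
    | (m+2), hn =>
      exfalso
      have h16 : 16 ∣ b.natAbs := by
        refine dvd_trans ?_ hN
        rw [hn]
        exact ⟨(2 ^ m) ^ 2, by ring⟩
      omega
  have hcard' : Nat.card (𝓞 K ⧸ P) = 2 := hcard
  have : Finite (𝓞 K ⧸ P) := Nat.finite_of_card_ne_zero (by omega)
  let _ := Fintype.ofFinite (𝓞 K ⧸ P)
  let e := ZMod.ringEquivOfPrime (𝓞 K ⧸ P) Nat.prime_two (by rw [← Nat.card_eq_fintype_card, hcard'])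
  refine ⟨e.symm.toRingHom.comp (Ideal.Quotient.mk P), ?_⟩
  change e.symm (Ideal.Quotient.mk P t) = 0
  rw [Ideal.Quotient.eq_zero_iff_mem.2 htP, map_zero]

/-- If `K = ℚ(θ)` with `θ` a root of the irreducible trinomial `x^7 + a x^5 + b` where
`a ≡ 3 (mod 8)` and `b ≡ 4 (mod 8)`, then `2` divides the index `(A_K : ℤ[η])` of every
integral generator `η` of `K`; hence `K` is not monogenic. -/
theorem two_dvd_index_case_C9
    (a b : ℤ) (ha : a ≡ 3 [ZMOD 8]) (hb : b ≡ 4 [ZMOD 8])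
    (hirr : Irreducible (X ^ 7 + C (a : ℚ) * X ^ 5 + C (b : ℚ)))
    (K : Type*) [Field K] [NumberField K] (θ : K)
    (hroot : θ ^ 7 + (a : K) * θ ^ 5 + (b : K) = 0)
    (hgen : Algebra.adjoin ℚ {θ} = ⊤) :
    (∀ η : 𝓞 K, Algebra.adjoin ℚ {(η : K)} = ⊤ →
        2 ∣ (Algebra.adjoin ℤ {η}).toSubring.toAddSubgroup.index) ∧
      ¬ ∃ η : 𝓞 K, Algebra.adjoin ℤ {η} = ⊤ := by
  have htint : IsIntegral ℤ θ := by
    refine ⟨X ^ 7 + C a * X ^ 5 + C b, by monicity!, ?_⟩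
    simp only [eval₂_add, eval₂_mul, eval₂_pow, eval₂_X, eval₂_C]
    simp only [algebraMap_int_eq, eq_intCast]
    exact hroot
  obtain ⟨t, ht⟩ : ∃ t : 𝓞 K, (t : K) = θ := ⟨⟨θ, htint⟩, rfl⟩
  obtain ⟨m, hm⟩ : ∃ m : ℤ, a = 3 + 8 * m := by
    obtain ⟨m, hm⟩ := ha.dvd
    exact ⟨-m, by linarith⟩
  obtain ⟨c, hc⟩ : ∃ c : ℤ, b = 4 * c := by
    obtain ⟨m, hm⟩ := hb.dvd
    exact ⟨1 - 2 * m, by linarith⟩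
  obtain ⟨α, hα⟩ : ∃ α : 𝓞 K, 2 * α = t ^ 3 * (t - 1) := by
    have h1 : IsIntegral (𝓞 K) (θ ^ 3 * (θ - 1) / 2) := by
      refine ⟨X ^ 2 + C (t ^ 3) * X + C ((1 + 2 * m) * t ^ 6 + c * t), by monicity!, ?_⟩
      have hm' : (a : K) = 3 + 8 * m := by rw [hm]; push_cast; ring
      have hc' : (b : K) = 4 * c := by rw [hc]; push_cast; ring
      rw [hm', hc'] at hroot
      simp only [eval₂_add, eval₂_mul, eval₂_pow, eval₂_X, eval₂_C]
      simp only [map_add, map_mul, map_pow,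
        map_one, map_ofNat, map_intCast]
      rw [show algebraMap (𝓞 K) K t = θ from ht]
      linear_combination (θ / 4) * hroot
    obtain ⟨α, hα⟩ := IsIntegrallyClosed.isIntegral_iff.1 h1
    refine ⟨α, ?_⟩
    apply RingOfIntegers.coe_injective
    simp only [map_mul, map_sub, map_pow, map_one, map_ofNat]
    rw [hα, show algebraMap (𝓞 K) K t = θ from ht]
    ring
  obtain ⟨z1, hz1, t1, ht1⟩ := C9_aux_hensel a b 1 ha hb (Or.inl rfl)
  obtain ⟨z2, hz2, t2, ht2⟩ := C9_aux_hensel a b (-1) ha hb (Or.inr rfl)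
  obtain ⟨f1, hf1⟩ := C9_aux_hom a b hirr K θ hroot hgen z1 hz1 t ht
  obtain ⟨f2, hf2⟩ := C9_aux_hom a b hirr K θ hroot hgen z2 hz2 t ht
  obtain ⟨f3, hf3⟩ := C9_aux_third a b ha hb hirr K θ hroot hgen t ht
  have q : (PadicInt.toZMod (2 : ℤ_[2]) : ZMod 2) = 0 := by rw [map_ofNat]; decide
  have q4 : (PadicInt.toZMod (4 : ℤ_[2]) : ZMod 2) = 0 := by rw [map_ofNat]; decide
  let g1 : 𝓞 K →+* ZMod 2 := PadicInt.toZMod.comp f1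
  let g2 : 𝓞 K →+* ZMod 2 := PadicInt.toZMod.comp f2
  have hg1 : g1 t = 1 := by
    change PadicInt.toZMod (f1 t) = 1
    rw [hf1, ht1]; simp [q4]
  have hg2 : g2 t = 1 := by
    change PadicInt.toZMod (f2 t) = 1
    rw [hf2, ht2]; simp [q4]
  have hα1 : g1 α = 0 := by
    have h := congrArg f1 hα
    simp only [map_mul, map_sub, map_pow, map_one, map_ofNat, hf1] at h
    have h' : f1 α = z1 ^ 3 * (2 * t1) := by
      apply mul_left_cancel₀ (two_ne_zero (α := ℤ_[2]))
      rw [h]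
      push_cast at ht1
      linear_combination z1 ^ 3 * ht1
    change PadicInt.toZMod (f1 α) = 0
    rw [h']; simp [q]
  have hα2 : g2 α = 1 := by
    have h := congrArg f2 hα
    simp only [map_mul, map_sub, map_pow, map_one, map_ofNat, hf2] at h
    have h' : f2 α = z2 ^ 3 * (2 * t2 - 1) := by
      apply mul_left_cancel₀ (two_ne_zero (α := ℤ_[2]))
      rw [h]
      push_cast at ht2
      linear_combination z2 ^ 3 * ht2
    change PadicInt.toZMod (f2 α) = 1
    rw [h', ht2]; simp [q, q4]
    try decide
  have h12 : g1 ≠ g2 := fun h => by rw [h, hα2] at hα1; exact one_ne_zero hα1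
  have h13 : g1 ≠ f3 := fun h => by rw [h, hf3] at hg1; exact zero_ne_one hg1
  have h23 : g2 ≠ f3 := fun h => by rw [h, hf3] at hg2; exact zero_ne_one hg2
  refine ⟨fun η _ => C9_aux_main g1 g2 f3 h12 h13 h23 η, ?_⟩
  rintro ⟨η, hη⟩
  have h := C9_aux_main g1 g2 f3 h12 h13 h23 η
  have htop : (Algebra.adjoin ℤ {η}).toSubring.toAddSubgroup = ⊤ := by
    rw [hη]; rfl
  rw [htop, AddSubgroup.index_top] at h
  omega
end

section
/- Let K = ℚ(θ) where θ is a root of the irreducible polynomial F(x) = x^7 + a x^5 + b with a ≡ 7 (mod 8), b ≡ 0 (mod 8). Then 2 is a common index divisor of K, so K is not monogenic. -/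
open NumberField Polynomial

theorem aux_minpoly (a b : ℤ)
    (hirr : Irreducible (X ^ 7 + C (a : ℚ) * X ^ 5 + C (b : ℚ)))
    {K : Type*} [Field K] [NumberField K] (θ : K)
    (hroot : θ ^ 7 + (a : K) * θ ^ 5 + (b : K) = 0) :
    minpoly ℚ θ = X ^ 7 + C (a : ℚ) * X ^ 5 + C (b : ℚ) := by
  symm
  apply minpoly.eq_of_irreducible_of_monic hirr
  · simp [hroot]
  · monicity!

theorem aux_hom (a b : ℤ)
    (hirr : Irreducible (X ^ 7 + C (a : ℚ) * X ^ 5 + C (b : ℚ)))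
    {K : Type*} [Field K] [NumberField K] (θ : 𝓞 K)
    (hroot : (θ : K) ^ 7 + (a : K) * θ ^ 5 + (b : K) = 0)
    (hgen : Algebra.adjoin ℚ {(θ : K)} = ⊤) (r : ℤ_[2])
    (hr : r ^ 7 + a * r ^ 5 + b = 0) : ∃ φ : 𝓞 K →+* ℤ_[2], φ θ = r := by
  have hm := aux_minpoly a b hirr (θ : K) hroot
  have hi : IsIntegral ℚ (θ : K) := Algebra.IsIntegral.isIntegral _
  let pb := PowerBasis.ofAdjoinEqTop hi hgen
  have hg : pb.gen = (θ : K) := PowerBasis.ofAdjoinEqTop_gen hi hgen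
  have hr' : (r : ℚ_[2]) ^ 7 + a * (r : ℚ_[2]) ^ 5 + b = 0 := by exact_mod_cast congrArg (fun x : ℤ_[2] => (x : ℚ_[2])) hr
  let f : K →ₐ[ℚ] ℚ_[2] := pb.lift (r : ℚ_[2]) (by rw [hg, hm]; simp [hr'])
  have hf : f θ = r := by rw [← hg]; exact pb.lift_gen _ _
  have key : ∀ x : 𝓞 K, f x ∈ PadicInt.subring 2 := by
    intro x
    have h1 : IsIntegral ℤ (f x) := (RingOfIntegers.isIntegral_coe x).map (f.restrictScalars ℤ)
    have h2 : IsIntegral ℤ_[2] (f x) := h1.tower_top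
    obtain ⟨y, hy⟩ := IsIntegrallyClosed.isIntegral_iff.mp h2
    rw [← hy]; exact y.2
  let g : 𝓞 K →+* PadicInt.subring 2 :=
    (f.toRingHom.comp (algebraMap (𝓞 K) K)).codRestrict (PadicInt.subring 2) key
  exact ⟨g, Subtype.ext hf⟩

theorem aux_index {R : Type*} [CommRing R] (φ : Fin 3 → (R →+* ZMod 2))
    (h : Function.Injective φ) (η : R) :
    2 ∣ (Algebra.adjoin ℤ {η}).toSubring.toAddSubgroup.index := by
  by_contra hn
  obtain ⟨i, j, hij, he⟩ := Fintype.exists_ne_map_eq_of_card_lt (fun i => φ i η) (by simp [ZMod.card])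
  apply hij
  apply h
  ext x
  have hx := (Algebra.adjoin ℤ {η}).toSubring.toAddSubgroup.nsmul_index_mem x
  set n := (Algebra.adjoin ℤ {η}).toSubring.toAddSubgroup.index
  have hx' : n • x ∈ Algebra.adjoin ℤ {η} := hx
  have h1 : (φ i).toIntAlgHom (n • x) = (φ j).toIntAlgHom (n • x) := by
    have : Algebra.adjoin ℤ {η} ≤ AlgHom.equalizer (φ i).toIntAlgHom (φ j).toIntAlgHom := by
      rw [Algebra.adjoin_le_iff]; simpa using he
    exact this hx'
  have h2 : (n : ZMod 2) = 1 := by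
    rw [ZMod.natCast_eq_one_iff_odd]
    exact Nat.odd_iff.mpr (by omega)
  simpa [h2] using h1

theorem aux_ram (a b : ℤ) (ha : a ≡ 7 [ZMOD 8]) 
    (hirr : Irreducible (X ^ 7 + C (a : ℚ) * X ^ 5 + C (b : ℚ)))
    {K : Type*} [Field K] [NumberField K] (θ : 𝓞 K)
    (hroot : (θ : K) ^ 7 + (a : K) * θ ^ 5 + (b : K) = 0)
    (hgen : Algebra.adjoin ℚ {(θ : K)} = ⊤) (k : ℕ) (c : ℤ) (hb : b = 2 ^ k * c)
    (hc : ¬ 2 ∣ c) (hk : ¬ 5 ∣ k) : ∃ φ : 𝓞 K →+* ZMod 2, φ θ = 0 := by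
  have hm := aux_minpoly a b hirr (θ : K) hroot
  have hi : IsIntegral ℚ (θ : K) := Algebra.IsIntegral.isIntegral _
  let pb := PowerBasis.ofAdjoinEqTop hi hgen
  have hg : pb.gen = (θ : K) := PowerBasis.ofAdjoinEqTop_gen hi hgen
  have hdeg : (X ^ 7 + C (a : ℚ) * X ^ 5 + C (b : ℚ)).natDegree = 7 := by compute_degree!
  have hfr : Module.finrank ℚ K = 7 := by
    rw [pb.finrank, ← pb.natDegree_minpoly, hg, hm, hdeg]
  have hnQ : Algebra.norm ℚ (θ : K) = - b := by
    rw [← hg, Algebra.PowerBasis.norm_gen_eq_coeff_zero_minpoly, ← pb.natDegree_minpoly, hg, hm, hdeg]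
    simp; norm_num
  have hn : Algebra.norm ℤ θ = -b := by
    have := Algebra.coe_norm_int θ
    rw [hnQ] at this
    exact_mod_cast this
  have hb0 : b ≠ 0 := by
    rintro rfl
    have h0 : (θ : K) = 0 := by
      rw [← Algebra.norm_eq_zero_iff (R := ℚ), hnQ]; simp
    have := minpoly.zero ℚ K
    rw [h0, this] at hm
    have := congrArg natDegree hm
    rw [hdeg] at this; simp at this
  have hk0 : k ≠ 0 := by rintro rfl; simp at hk
  have habs : (2 : ℤ) ∣ (Ideal.absNorm (Ideal.span {θ}) : ℤ) := by
    rw [Ideal.absNorm_span_singleton, hn, hb, Int.dvd_natAbs, dvd_neg]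
    exact Dvd.dvd.mul_right (dvd_pow_self 2 hk0) _
  obtain ⟨P, hPm, hP2, hPd⟩ := Ideal.exists_isMaximal_dvd_of_dvd_absNorm Int.prime_two _ habs
  have hθ : θ ∈ P := by
    rw [Ideal.dvd_span_singleton] at hPd; exact hPd
  have hint : ∀ z : ℤ, (z : 𝓞 K) ∈ P ↔ 2 ∣ z := by
    intro z
    rw [← Ideal.mem_span_singleton, ← hP2]; simp [Ideal.mem_comap]
  have h2P : (2 : 𝓞 K) ∈ P := by simpa using (hint 2).2 dvd_rfl
  have hPne : P ≠ ⊥ := by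
    rintro rfl; simp at h2P
  have hPp : Prime P := Ideal.prime_of_isPrime hPne hPm.isPrime
  have hrel : θ ^ 5 * (θ ^ 2 + a) = 2 ^ k * ((-c : ℤ) : 𝓞 K) := by
    apply RingOfIntegers.ext
    have : (b : K) = 2 ^ k * c := by exact_mod_cast congrArg (fun z : ℤ => (z : K)) hb
    push_cast
    simp only [map_mul, map_add, map_pow, map_neg, map_intCast, map_ofNat]
    linear_combination hroot - this
  have hθ0 : θ ≠ 0 := by
    rintro rfl; simp at hn; exact hb0 hn
  have hrelI : Ideal.span {θ} ^ 5 * Ideal.span {θ ^ 2 + (a : 𝓞 K)} = Ideal.span {(2 : 𝓞 K)} ^ k * Ideal.span {((-c : ℤ) : 𝓞 K)} := by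
    simp only [Ideal.span_singleton_pow, Ideal.span_singleton_mul_span_singleton, hrel]
  have h3 : emultiplicity P (Ideal.span {θ ^ 2 + (a : 𝓞 K)}) = 0 := by
    rw [emultiplicity_eq_zero, Ideal.dvd_span_singleton]
    intro h
    have : (a : 𝓞 K) ∈ P := by
      simpa using P.sub_mem h (P.mul_mem_left θ hθ |> fun h => by simpa [sq] using h : θ ^ 2 ∈ P)
    rw [hint] at this
    have := ha.symm.dvd; omega
  have h4 : emultiplicity P (Ideal.span {((-c : ℤ) : 𝓞 K)}) = 0 := by
    rw [emultiplicity_eq_zero, Ideal.dvd_span_singleton, hint]; simpa using hc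
  have h5 := congrArg (emultiplicity P) hrelI
  rw [emultiplicity_mul hPp, emultiplicity_mul hPp, h3, h4, emultiplicity_pow hPp, emultiplicity_pow hPp] at h5
  have f1 : FiniteMultiplicity P (Ideal.span {θ}) := FiniteMultiplicity.of_prime_left hPp (by simpa using hθ0)
  have f2 : FiniteMultiplicity P (Ideal.span {(2 : 𝓞 K)}) := FiniteMultiplicity.of_prime_left hPp (by simp)
  rw [f1.emultiplicity_eq_multiplicity, f2.emultiplicity_eq_multiplicity] at h5
  have h6 : 5 * multiplicity P (Ideal.span {θ}) = k * multiplicity P (Ideal.span {(2 : 𝓞 K)}) := by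
    simp only [add_zero] at h5; exact_mod_cast h5
  have h7 : 5 ∣ multiplicity P (Ideal.span {(2 : 𝓞 K)}) :=
    ((Nat.Prime.dvd_mul (by norm_num)).1 ⟨_, h6.symm⟩).resolve_left hk
  have h8 : 1 ≤ multiplicity P (Ideal.span {(2 : 𝓞 K)}) := by
    have : P ^ 1 ∣ Ideal.span {(2 : 𝓞 K)} := by rw [pow_one, Ideal.dvd_span_singleton]; exact h2P
    exact f2.le_multiplicity_of_pow_dvd this
  have h9 : P ^ 5 ∣ Ideal.span {(2 : 𝓞 K)} := pow_dvd_of_le_multiplicity (by omega)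
  have h10 : P.absNorm ^ 5 ∣ 2 ^ 7 := by
    have := Ideal.absNorm_dvd_absNorm_of_le (Ideal.le_of_dvd h9)
    rw [map_pow] at this
    have h := Ideal.absNorm_span_natCast (S := 𝓞 K) 2
    rw [RingOfIntegers.rank, hfr] at h
    rw [← h]; exact_mod_cast this
  have h11 : P.absNorm = 2 := by
    have hne : P.absNorm ≠ 1 := by rw [Ne, Ideal.absNorm_eq_one_iff]; exact hPm.ne_top
    have hle : P.absNorm < 3 := by
      by_contra hlt
      have := Nat.le_of_dvd (by norm_num) h10
      have := Nat.pow_le_pow_left (not_lt.1 hlt) 5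
      omega
    have : P.absNorm ≠ 0 := by
      intro h; rw [h] at h10; simp at h10
    omega
  have h12 : Nat.card (𝓞 K ⧸ P) = 2 := h11
  have : Finite (𝓞 K ⧸ P) := Nat.finite_of_card_ne_zero (by omega)
  have := Fintype.ofFinite (𝓞 K ⧸ P)
  let e := ZMod.ringEquivOfPrime (𝓞 K ⧸ P) Nat.prime_two (by rw [← Nat.card_eq_fintype_card, h12])
  exact ⟨e.symm.toRingHom.comp (Ideal.Quotient.mk P), by simp [Ideal.Quotient.eq_zero_iff_mem.2 hθ]⟩

theorem aux_unram (a b : ℤ) (ha : a ≡ 7 [ZMOD 8]) (m : ℕ) (c : ℤ) (hb : b = 2 ^ (5 * m) * c) (hm : m ≠ 0)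
    (hc : ¬ 2 ∣ c) : ∃ r : ℤ_[2], r ^ 7 + a * r ^ 5 + b = 0 ∧ PadicInt.toZMod r = 0 := by
  have e1 : (Polynomial.aeval (1 : ℤ_[2]) (C (2 ^ (2 * m)) * X ^ 7 + C a * X ^ 5 + C c : ℤ[X])) = ((2 ^ (2 * m) + a + c : ℤ) : ℤ_[2]) := by simp [map_ofNat]
  have e2 : (Polynomial.aeval (1 : ℤ_[2]) (derivative (C (2 ^ (2 * m)) * X ^ 7 + C a * X ^ 5 + C c : ℤ[X]))) = ((2 ^ (2 * m) * 7 + a * 5 : ℤ) : ℤ_[2]) := by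
    rw [derivative_add, derivative_add, derivative_C_mul, derivative_C_mul, derivative_C]
    simp [map_ofNat]
  have hA := ha.symm.dvd
  have h2 : (2 : ℤ) ∣ 2 ^ (2 * m) := dvd_pow_self 2 (by omega)
  obtain ⟨z, hz, -⟩ := hensels_lemma (p := 2) (F := (C (2 ^ (2 * m)) * X ^ 7 + C a * X ^ 5 + C c : ℤ[X])) (a := (1 : ℤ_[2])) (by
    rw [e1, e2]
    have : ‖((2 ^ (2 * m) * 7 + a * 5 : ℤ) : ℤ_[2])‖ = 1 := by
      rw [PadicInt.norm_intCast_eq_one_iff]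
      refine IsCoprime.symm ?_
      refine Int.prime_two.coprime_iff_not_dvd.2 ?_
      omega
    rw [this, one_pow, PadicInt.norm_int_lt_one_iff_dvd]
    push_cast; omega)
  refine ⟨2 ^ m * z, ?_, ?_⟩
  · have : (b : ℤ_[2]) = 2 ^ (5 * m) * c := by exact_mod_cast congrArg (fun z : ℤ => (z : ℤ_[2])) hb
    simp [map_ofNat] at hz
    rw [this]
    linear_combination 2 ^ (5 * m) * hz
  · have : (2 : ZMod 2) = 0 := rfl
    simp [this, hm, map_ofNat]

theorem aux_unit (a b s : ℤ) (hs : s = 1 ∨ s = -1) (ha : a ≡ 7 [ZMOD 8]) (hb : b ≡ 0 [ZMOD 8]) :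
    ∃ z t : ℤ_[2], z ^ 7 + a * z ^ 5 + b = 0 ∧ z = s + 4 * t := by
  have hA := ha.symm.dvd
  have hB := hb.symm.dvd
  have e1 : (Polynomial.aeval (s : ℤ_[2]) (X ^ 7 + C a * X ^ 5 + C b : ℤ[X])) = ((s ^ 7 + a * s ^ 5 + b : ℤ) : ℤ_[2]) := by simp
  have e2 : (Polynomial.aeval (s : ℤ_[2]) (derivative (X ^ 7 + C a * X ^ 5 + C b : ℤ[X]))) = ((7 * s ^ 6 + a * (5 * s ^ 4) : ℤ) : ℤ_[2]) := by
    simp [map_ofNat]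
  have e3 : ‖((7 * s ^ 6 + a * (5 * s ^ 4) : ℤ) : ℤ_[2])‖ = 1 / 2 := by
    obtain ⟨q, hq⟩ : ∃ q, 7 * s ^ 6 + a * (5 * s ^ 4) = 2 * (2 * q + 1) := by
      refine ⟨(7 + 5 * a - 2) / 4, ?_⟩
      rcases hs with rfl | rfl <;> norm_num <;> omega
    rw [hq]; push_cast
    rw [norm_mul]
    have : ‖((2 * q + 1 : ℤ) : ℤ_[2])‖ = 1 := by
      rw [PadicInt.norm_intCast_eq_one_iff]
      exact ⟨1, -q, by push_cast; ring⟩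
    push_cast at this
    rw [this]
    have := PadicInt.norm_p (p := 2)
    push_cast at this
    rw [this]; norm_num
  have e4 : ‖((s ^ 7 + a * s ^ 5 + b : ℤ) : ℤ_[2])‖ ≤ 1 / 8 := by
    have := (PadicInt.norm_int_le_pow_iff_dvd (p := 2) (k := s ^ 7 + a * s ^ 5 + b) (n := 3)).2 (by
      rcases hs with rfl | rfl <;> norm_num <;> omega)
    refine this.trans ?_
    norm_num
  obtain ⟨z, hz, hz2, -⟩ := hensels_lemma (p := 2) (F := (X ^ 7 + C a * X ^ 5 + C b : ℤ[X])) (a := (s : ℤ_[2])) (by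
    rw [e1, e2, e3]
    linarith)
  rw [e2, e3] at hz2
  have h4 : ‖z - s‖ ≤ ((2 : ℕ) : ℝ) ^ (-(2 : ℕ) : ℤ) := by
    rw [PadicInt.norm_le_pow_iff_norm_lt_pow_add_one]
    norm_num at hz2 ⊢; exact hz2
  rw [PadicInt.norm_le_pow_iff_mem_span_pow, Ideal.mem_span_singleton] at h4
  obtain ⟨t, ht⟩ := h4
  refine ⟨z, t, by simpa using hz, ?_⟩
  push_cast at ht
  linear_combination ht

/-- If `K = ℚ(θ)` with `θ` a root of the irreducible trinomial `x^7 + a x^5 + b` where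
`a ≡ 7 (mod 8)` and `b ≡ 0 (mod 8)`, then `2` is a common index divisor of `K`: it divides the index of every
integral generator `η` of `K`; hence `K` is not monogenic. -/
theorem two_dvd_index_case_C10_C11
    (a b : ℤ) (ha : a ≡ 7 [ZMOD 8]) (hb : b ≡ 0 [ZMOD 8])
    (hirr : Irreducible (X ^ 7 + C (a : ℚ) * X ^ 5 + C (b : ℚ)))
    (K : Type*) [Field K] [NumberField K] (θ : K)
    (hroot : θ ^ 7 + (a : K) * θ ^ 5 + (b : K) = 0)
    (hgen : Algebra.adjoin ℚ {θ} = ⊤) :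
    (∀ η : 𝓞 K, Algebra.adjoin ℚ {(η : K)} = ⊤ →
        2 ∣ (Algebra.adjoin ℤ {η}).toSubring.toAddSubgroup.index) ∧
      ¬ ∃ η : 𝓞 K, Algebra.adjoin ℤ {η} = ⊤ := by
  have hint : IsIntegral ℤ θ := by
    refine ⟨X ^ 7 + C a * X ^ 5 + C b, by monicity!, ?_⟩
    rw [eval₂_add, eval₂_add, eval₂_mul, eval₂_C, eval₂_C]
    simpa using hroot
  obtain ⟨θ, rfl⟩ : ∃ t : 𝓞 K, (t : K) = θ := ⟨⟨θ, hint⟩, rfl⟩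
  have hrO : θ ^ 7 + (a : 𝓞 K) * θ ^ 5 + (b : 𝓞 K) = 0 := by
    apply RingOfIntegers.ext; simpa using hroot
  obtain ⟨A, hA⟩ := ha.symm.dvd
  obtain ⟨B, hB⟩ := hb.symm.dvd
  have h20 : (2 : ZMod 2) = 0 := rfl
  have hb0 : b ≠ 0 := by
    rintro rfl
    have hm := aux_minpoly a 0 hirr (θ : K) hroot
    have hθ0 : (θ : K) ≠ 0 := by
      intro h0
      have hdeg : (X ^ 7 + C (a : ℚ) * X ^ 5 + C ((0 : ℤ) : ℚ)).natDegree = 7 := by compute_degree!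
      have := minpoly.zero ℚ K
      rw [h0, this] at hm
      have := congrArg natDegree hm
      rw [hdeg] at this; simp at this
    have := minpoly.coeff_zero_ne_zero (A := ℚ) (Algebra.IsIntegral.isIntegral (θ : K)) hθ0
    rw [hm] at this; simp at this
  -- third homomorphism
  obtain ⟨φ₀, hφ₀⟩ : ∃ φ : 𝓞 K →+* ZMod 2, φ θ = 0 := by
    obtain ⟨k, c, hc, hbc⟩ := (Int.finiteMultiplicity_iff.2 ⟨by norm_num, hb0⟩ : FiniteMultiplicity 2 b).exists_eq_pow_mul_and_not_dvd |> fun ⟨c, h⟩ => (⟨_, c, h.2, h.1⟩ : ∃ (k : ℕ) (c : ℤ), ¬ 2 ∣ c ∧ b = 2 ^ k * c)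
    by_cases hk : 5 ∣ k
    · obtain ⟨m, rfl⟩ := hk
      obtain ⟨r, hr, hr0⟩ := aux_unram a b ha m c hbc (by rintro rfl; simp at hbc; omega) hc
      obtain ⟨φ, hφ⟩ := aux_hom a b hirr θ hroot hgen r hr
      exact ⟨PadicInt.toZMod.comp φ, by simp [hφ, hr0]⟩
    · exact aux_ram a b ha hirr θ hroot hgen k c hbc hc hk
  -- the element separating the other two
  obtain ⟨β, hβ⟩ : ∃ β : 𝓞 K, 2 * β = θ ^ 5 * (θ - 1) := by
    let y : K := (θ : K) ^ 5 * (θ - 1) / 2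
    have hy : IsIntegral (𝓞 K) y := by
      refine ⟨X ^ 2 + C (θ ^ 5) * X - C (θ ^ 5 * (2 * (-B - (A + 1) * θ ^ 5) - 0)), ?_, ?_⟩
      · monicity!
      · have h1 : (a : K) = 7 + 8 * A := by
          have : a = 7 + 8 * A := by omega
          rw [this]; push_cast; ring
        have h2 : (b : K) = 8 * B := by
          have : b = 8 * B := by omega
          rw [this]; push_cast; ring
        rw [h1, h2] at hroot
        rw [eval₂_sub, eval₂_C, eval₂_add, eval₂_mul, eval₂_C]
        simp only [ eval₂_pow, eval₂_X, map_mul, map_sub, map_add, map_pow, map_neg, map_intCast, map_ofNat, map_one, map_zero, y]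
        linear_combination (θ : K) ^ 5 / 4 * hroot
    have hy2 : IsIntegral ℤ y := isIntegral_trans (A := 𝓞 K) y hy
    obtain ⟨β, hβ⟩ : ∃ β : 𝓞 K, (β : K) = y := ⟨⟨y, hy2⟩, rfl⟩
    refine ⟨β, ?_⟩
    apply RingOfIntegers.ext
    change algebraMap (𝓞 K) K (2 * _) = _
    rw [map_mul, map_ofNat]
    change 2 * (β : K) = _
    rw [hβ]
    push_cast
    simp only [y]
    ring
  obtain ⟨z₁, t₁, hz₁, ht₁⟩ := aux_unit a b 1 (Or.inl rfl) ha hb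
  obtain ⟨z₂, t₂, hz₂, ht₂⟩ := aux_unit a b (-1) (Or.inr rfl) ha hb
  obtain ⟨φ₁, hφ₁⟩ := aux_hom a b hirr θ hroot hgen z₁ hz₁
  obtain ⟨φ₂, hφ₂⟩ := aux_hom a b hirr θ hroot hgen z₂ hz₂
  have hβ₁ : φ₁ β = z₁ ^ 5 * (2 * t₁) := by
    have := congrArg φ₁ hβ
    simp only [map_mul, map_sub, map_pow, map_one, map_ofNat, hφ₁] at this
    have h2 : (2 : ℤ_[2]) ≠ 0 := by norm_num
    apply mul_left_cancel₀ h2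
    rw [this, ht₁]; push_cast; ring
  have hβ₂ : φ₂ β = z₂ ^ 5 * (2 * t₂ - 1) := by
    have := congrArg φ₂ hβ
    simp only [map_mul, map_sub, map_pow, map_one, map_ofNat, hφ₂] at this
    have h2 : (2 : ℤ_[2]) ≠ 0 := by norm_num
    apply mul_left_cancel₀ h2
    rw [this, ht₂]; push_cast; ring
  have h4 : (4 : ZMod 2) = 0 := rfl
  have hm1 : (-1 : ZMod 2) = 1 := rfl
  have q1 : PadicInt.toZMod (φ₁ θ) = 1 := by rw [hφ₁, ht₁]; simp [h4, map_ofNat]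
  have q2 : PadicInt.toZMod (φ₂ θ) = 1 := by rw [hφ₂, ht₂]; simp [h4, hm1, map_ofNat]
  have q3 : PadicInt.toZMod (φ₁ β) = 0 := by rw [hβ₁]; simp [h20, map_ofNat]
  have q4 : PadicInt.toZMod (φ₂ β) = 1 := by
    rw [hβ₂, ← hφ₂, map_mul, map_pow, q2]; simp [h20, map_ofNat]
  have main : ∀ η : 𝓞 K, 2 ∣ (Algebra.adjoin ℤ {η}).toSubring.toAddSubgroup.index := by
    apply aux_index ![φ₀, PadicInt.toZMod.comp φ₁, PadicInt.toZMod.comp φ₂]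
    have d1 : φ₀ ≠ PadicInt.toZMod.comp φ₁ := fun h => by
      have := congrArg (fun f => f θ) h
      simp [hφ₀, q1] at this
    have d2 : φ₀ ≠ PadicInt.toZMod.comp φ₂ := fun h => by
      have := congrArg (fun f => f θ) h
      simp [hφ₀, q2] at this
    have d3 : PadicInt.toZMod.comp φ₁ ≠ PadicInt.toZMod.comp φ₂ := fun h => by
      have := congrArg (fun f => f β) h
      simp [q3, q4] at this
    intro i j hij
    fin_cases i <;> fin_cases j <;> simp at hij ⊢ <;>
      first
      | exact d1 hij | exact d2 hij | exact d3 hij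
      | exact d1 hij.symm | exact d2 hij.symm | exact d3 hij.symm
  refine ⟨fun η _ => main η, ?_⟩
  rintro ⟨η, hη⟩
  have := main η
  rw [hη] at this
  have h1 : (⊤ : Subalgebra ℤ (𝓞 K)).toSubring.toAddSubgroup = ⊤ := by ext; simp
  rw [h1] at this
  simp at this
end

section
/- The polynomial x^7 + 867 x^5 + 68 is irreducible over ℚ, and the field K = ℚ(θ) for θ a root of it is not monogenic. -/
open NumberField Polynomial

lemma aux_irr_int : Irreducible (X ^ 7 + C (867 : ℤ) * X ^ 5 + C (68 : ℤ)) := by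
  have hd : (X ^ 7 + C (867 : ℤ) * X ^ 5 + C (68 : ℤ)).natDegree = 7 := by compute_degree!
  have hm : (X ^ 7 + C (867 : ℤ) * X ^ 5 + C (68 : ℤ)).Monic := by monicity!
  have hp : (Ideal.span {(17 : ℤ)}).IsPrime :=
    (Ideal.span_singleton_prime (by norm_num)).2 (by norm_num)
  refine irreducible_of_eisenstein_criterion hp ?_ ?_ ?_ ?_ hm.isPrimitive
  · rw [hm.leadingCoeff, Ideal.mem_span_singleton]; norm_num
  · intro n hn
    rw [degree_eq_natDegree hm.ne_zero, hd] at hn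
    have hn' : n < 7 := by exact_mod_cast hn
    rw [Ideal.mem_span_singleton]
    interval_cases n <;> simp [coeff_X_pow] <;> norm_num
  · rw [← natDegree_pos_iff_degree_pos, hd]; norm_num
  · rw [Ideal.span_singleton_pow, Ideal.mem_span_singleton]
    simp [coeff_X_pow]

lemma aux_irr : Irreducible (X ^ 7 + C (867 : ℚ) * X ^ 5 + C (68 : ℚ)) := by
  have hm : (X ^ 7 + C (867 : ℤ) * X ^ 5 + C (68 : ℤ)).Monic := by monicity!
  have := (hm.irreducible_iff_irreducible_map_fraction_map (K := ℚ)).1 aux_irr_int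
  simpa [map_ofNat] using this

/-- Hensel: roots near `1` and `3`. -/
lemma aux_hensel (a : ℤ) (ha : a = 1 ∨ a = 3) :
    ∃ z b : ℤ_[2], z ^ 7 + 867 * z ^ 5 + 68 = 0 ∧ z = a + 4 * b := by
  have hE : ∀ k : ℤ, ‖(2 * (2 * k + 1) : ℤ_[2])‖ = 1 / 2 := by
    intro k
    have h1 : ‖((2 * k + 1 : ℤ) : ℤ_[2])‖ = 1 := by
      apply le_antisymm (PadicInt.norm_le_one _)
      by_contra h
      rw [not_le, PadicInt.norm_intCast_lt_one_iff] at h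
      omega
    have h2 : ‖(2 : ℤ_[2])‖ = 1 / 2 := by
      have := PadicInt.norm_p (p := 2)
      simpa using this
    push_cast at h1
    rw [norm_mul, h1, h2, mul_one]
  have h8 : ∀ k : ℤ, ‖(8 * k : ℤ_[2])‖ < (1 / 2) ^ 2 := by
    intro k
    have h2 : ‖(2 : ℤ_[2])‖ = 1 / 2 := by
      have := PadicInt.norm_p (p := 2)
      simpa using this
    have : (8 * k : ℤ_[2]) = 2 ^ 3 * k := by norm_num
    rw [this, norm_mul, norm_pow, h2]
    have := PadicInt.norm_le_one (k : ℤ_[2])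
    nlinarith
  have hD : ‖(X ^ 7 + C (867 : ℤ) * X ^ 5 + C (68 : ℤ)).derivative.aeval (a : ℤ_[2])‖ = 1 / 2 := by
    rcases ha with rfl | rfl
    · rw [← hE 1085]; congr 1; simp [map_ofNat]; norm_num
    · rw [← hE 89059]; congr 1; simp [map_ofNat]; norm_num
  have hF : ‖(X ^ 7 + C (867 : ℤ) * X ^ 5 + C (68 : ℤ)).aeval (a : ℤ_[2])‖ < (1 / 2) ^ 2 := by
    rcases ha with rfl | rfl
    · refine lt_of_eq_of_lt ?_ (h8 117); congr 1; simp [map_ofNat]; norm_num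
    · refine lt_of_eq_of_lt ?_ (h8 26617); congr 1; simp [map_ofNat]; norm_num
  obtain ⟨z, hz, hza, -⟩ := hensels_lemma (p := 2)
    (F := X ^ 7 + C (867 : ℤ) * X ^ 5 + C (68 : ℤ)) (a := (a : ℤ_[2])) (by rw [hD]; exact hF)
  rw [hD] at hza
  have : ‖z - a‖ ≤ (2 : ℕ) ^ (-(2 : ℕ) : ℤ) := by
    rw [PadicInt.norm_le_pow_iff_norm_lt_pow_add_one]
    norm_num at hza ⊢
    exact hza
  rw [PadicInt.norm_le_pow_iff_mem_span_pow, Ideal.mem_span_singleton] at this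
  obtain ⟨b, hb⟩ := this
  refine ⟨z, b, by simpa [map_ofNat] using hz, ?_⟩
  push_cast at hb
  linear_combination hb

lemma aux_pb (K : Type) [Field K] [NumberField K] (θ : K)
    (h : θ ^ 7 + 867 * θ ^ 5 + 68 = 0) (ht : Algebra.adjoin ℚ {θ} = ⊤) :
    ∃ pb : PowerBasis ℚ K, pb.gen = θ ∧
      minpoly ℚ θ = X ^ 7 + C (867 : ℚ) * X ^ 5 + C (68 : ℚ) := by
  refine ⟨PowerBasis.ofAdjoinEqTop (Algebra.IsIntegral.isIntegral θ) ht, by simp, ?_⟩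
  symm
  apply minpoly.eq_of_irreducible_of_monic aux_irr
  · simpa using h
  · monicity!

lemma aux_hom_s14 (K : Type) [Field K] [NumberField K] (θ : K)
    (h : θ ^ 7 + 867 * θ ^ 5 + 68 = 0) (ht : Algebra.adjoin ℚ {θ} = ⊤)
    (z : ℤ_[2]) (hz : z ^ 7 + 867 * z ^ 5 + 68 = 0) (t : 𝓞 K) (htt : (t : K) = θ) :
    ∃ φ : 𝓞 K →+* ℤ_[2], φ t = z := by
  obtain ⟨pb, hpb, hmin⟩ := aux_pb K θ h ht
  have hz' : (z : ℚ_[2]) ^ 7 + 867 * (z : ℚ_[2]) ^ 5 + 68 = 0 := by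
    have := congrArg (PadicInt.Coe.ringHom (p := 2)) hz
    simp only [map_mul, map_add, map_pow, map_ofNat, map_zero] at this
    exact this
  let ψ : K →ₐ[ℚ] ℚ_[2] := pb.lift (z : ℚ_[2]) (by rw [hpb, hmin]; simpa using hz')
  have hψ : ψ θ = z := by rw [← hpb]; exact pb.lift_gen _ _
  have hint : ∀ x : 𝓞 K, ψ (x : K) ∈ PadicInt.subring 2 := by
    intro x
    have h1 : IsIntegral ℤ (ψ (x : K)) :=
      (RingOfIntegers.isIntegral_coe x).map (ψ.toRingHom.toIntAlgHom)
    have h2 : IsIntegral ℤ_[2] (ψ (x : K)) := h1.tower_top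
    obtain ⟨y, hy⟩ := IsIntegrallyClosed.isIntegral_iff.1 h2
    rw [← hy]
    exact y.2
  let φ : 𝓞 K →+* PadicInt.subring 2 :=
    (ψ.toRingHom.comp (algebraMap (𝓞 K) K)).codRestrict (PadicInt.subring 2) hint
  refine ⟨φ, ?_⟩
  apply Subtype.ext
  change ψ (t : K) = z
  rw [htt, hψ]

lemma aux_int (K : Type) [Field K] [NumberField K] (θ : K)
    (h : θ ^ 7 + 867 * θ ^ 5 + 68 = 0) : IsIntegral ℤ ((θ ^ 4 - θ ^ 3) / 2) := by
  refine ⟨X ^ 7 + C (-751689) * X ^ 6 + C 141422016652 * X ^ 5 + C 19190178 * X ^ 4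
    + C 1006298 * X ^ 3 + C (-543721710) * X ^ 2 + C (-21332246) * X + C (-2299284),
    by monicity!, ?_⟩
  simp only [eval₂_add, eval₂_mul, eval₂_pow, eval₂_X, eval₂_C]
  simp only [map_neg, map_ofNat]
  linear_combination ((-33813)*θ^0 + (627419/4)*θ^3 + (-627419/4)*θ^4 + (1724463/4)*θ^5 + (-15991815/8)*θ^6 + (3998451)*θ^7 + (-63981999/16)*θ^8 + (7992193/4)*θ^9 + (-87895729/16)*θ^10 + (815478797/32)*θ^11 + (-1630947275/32)*θ^12 + (3260448003/64)*θ^13 + (-101712351/4)*θ^14 + (80614853/16)*θ^15 + (3788769/128)*θ^16 + (-769861/128)*θ^17 + (3017/64)*θ^18 + (-423/64)*θ^19 + (-7/128)*θ^20 + (1/128)*θ^21) * h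

lemma aux_third (K : Type) [Field K] [NumberField K] (θ : K)
    (h : θ ^ 7 + 867 * θ ^ 5 + 68 = 0) (ht : Algebra.adjoin ℚ {θ} = ⊤)
    (t : 𝓞 K) (htt : (t : K) = θ) :
    ∃ φ : 𝓞 K →+* ZMod 2, φ t = 0 := by
  obtain ⟨pb, hpb, hmin⟩ := aux_pb K θ h ht
  have hdeg : (X ^ 7 + C (867 : ℚ) * X ^ 5 + C (68 : ℚ)).natDegree = 7 := by compute_degree!
  have hfr : Module.finrank ℚ K = 7 := by
    rw [pb.finrank, ← pb.natDegree_minpoly, hpb, hmin, hdeg]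
  have hN : Algebra.norm ℤ t = -68 := by
    have h1 : Algebra.norm ℚ θ = -68 := by
      rw [← hpb, Algebra.PowerBasis.norm_gen_eq_coeff_zero_minpoly, ← pb.natDegree_minpoly, hpb, hmin, hdeg]
      simp [coeff_X_pow]
      norm_num
    have h2 := Algebra.coe_norm_int t
    rw [htt, h1] at h2
    exact_mod_cast h2
  have hA : (Ideal.span {t}).absNorm = 68 := by
    rw [Ideal.absNorm_span_singleton, hN]; rfl
  have hA2 : (Ideal.span {(2 : 𝓞 K)}).absNorm = 2 ^ 7 := by
    have : (2 : 𝓞 K) = algebraMap ℤ (𝓞 K) 2 := by simp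
    rw [Ideal.absNorm_span_singleton, this, Algebra.norm_algebraMap, RingOfIntegers.rank, hfr]
    rfl
  obtain ⟨P, hP, hPu, hPt⟩ := Ideal.exists_isMaximal_dvd_of_dvd_absNorm' Nat.prime_two
    (Ideal.span {t}) (by rw [hA]; norm_num)
  have htP : t ∈ P := by rwa [Ideal.dvd_span_singleton] at hPt
  have h2P : (2 : 𝓞 K) ∈ P := by
    have : (2 : ℤ) ∈ P.under ℤ := by rw [hPu]; exact Ideal.mem_span_singleton_self _
    simpa [Ideal.mem_comap] using this
  have hP0 : P ≠ ⊥ := by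
    rintro rfl
    simp at h2P
  have hPp : Prime P := Ideal.prime_of_isPrime hP0 hP.isPrime
  have heq : t ^ 5 * (t ^ 2 + 867) = 2 ^ 2 * (-17) := by
    apply RingOfIntegers.ext
    simp only [map_mul, map_add, map_pow, map_neg, map_ofNat]
    have htt' : algebraMap (𝓞 K) K t = θ := htt
    rw [htt']
    linear_combination h
  have h1P : (1 : 𝓞 K) ∉ P := fun hh => hP.ne_top ((Ideal.eq_top_iff_one _).2 hh)
  have hu1 : t ^ 2 + 867 ∉ P := by
    intro hh
    apply h1P
    have e : (1 : 𝓞 K) = (t ^ 2 + 867) - t * t - 433 * 2 := by ring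
    rw [e]
    exact P.sub_mem (P.sub_mem hh (P.mul_mem_left _ htP)) (P.mul_mem_left _ h2P)
  have hu2 : (-17 : 𝓞 K) ∉ P := by
    intro hh
    apply h1P
    have e : (1 : 𝓞 K) = (-17) + 9 * 2 := by ring
    rw [e]
    exact P.add_mem hh (P.mul_mem_left _ h2P)
  have hm := congrArg (fun x => emultiplicity P (Ideal.span {x})) heq
  simp only [← Ideal.span_singleton_mul_span_singleton, ← Ideal.span_singleton_pow] at hm
  rw [emultiplicity_mul hPp, emultiplicity_mul hPp, emultiplicity_pow hPp, emultiplicity_pow hPp,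
    emultiplicity_eq_zero.2 (fun hh => hu1 (Ideal.dvd_span_singleton.1 hh)),
    emultiplicity_eq_zero.2 (fun hh => hu2 (Ideal.dvd_span_singleton.1 hh)), add_zero, add_zero] at hm
  have hfin2 : FiniteMultiplicity P (Ideal.span {(2 : 𝓞 K)}) :=
    FiniteMultiplicity.of_prime_left hPp (by simp)
  have ht0 : t ≠ 0 := by
    rintro rfl
    simp at hN
  have hfint : FiniteMultiplicity P (Ideal.span {t}) :=
    FiniteMultiplicity.of_prime_left hPp (by simpa using ht0)
  rw [hfin2.emultiplicity_eq_multiplicity, hfint.emultiplicity_eq_multiplicity] at hm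
  have hm' : 5 * multiplicity P (Ideal.span {t}) = 2 * multiplicity P (Ideal.span {(2 : 𝓞 K)}) := by
    exact_mod_cast hm
  have hpos : multiplicity P (Ideal.span {(2 : 𝓞 K)}) ≠ 0 := by
    rw [multiplicity_ne_zero, Ideal.dvd_span_singleton]; exact h2P
  have h5 : P ^ 5 ∣ Ideal.span {(2 : 𝓞 K)} := by
    rw [hfin2.pow_dvd_iff_le_multiplicity]; omega
  have h6 : P.absNorm ^ 5 ∣ 2 ^ 7 := by
    rw [← hA2, ← map_pow]
    exact Ideal.absNorm_dvd_absNorm_of_le (Ideal.le_of_dvd h5)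
  have h7 : P.absNorm = 2 := by
    have hd : P.absNorm ∣ 2 ^ 7 := (dvd_pow_self _ (by norm_num)).trans h6
    obtain ⟨f, hf, hf'⟩ := (Nat.dvd_prime_pow Nat.prime_two).1 hd
    rw [hf', ← pow_mul, Nat.pow_dvd_pow_iff_le_right (by norm_num)] at h6
    have hf0 : f ≠ 0 := by
      rintro rfl
      exact hP.ne_top (Ideal.absNorm_eq_one_iff.1 (by simpa using hf'))
    obtain rfl : f = 1 := by omega
    simpa using hf'
  have hfi : Finite (𝓞 K ⧸ P) := by
    apply Nat.finite_of_card_ne_zero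
    rw [← Submodule.cardQuot_apply, ← Ideal.absNorm_apply, h7]; norm_num
  have := Fintype.ofFinite (𝓞 K ⧸ P)
  have hc : Fintype.card (𝓞 K ⧸ P) = 2 := by
    rw [← Nat.card_eq_fintype_card, ← h7]; rfl
  refine ⟨(ZMod.ringEquivOfPrime (𝓞 K ⧸ P) Nat.prime_two hc).symm.toRingHom.comp
    (Ideal.Quotient.mk P), ?_⟩
  simp [Ideal.Quotient.eq_zero_iff_mem.2 htP]

/-- `x^7 + 867 x^5 + 68` is irreducible over `ℚ`, and the septic field it defines is
not monogenic. -/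
theorem not_monogenic_example_867_68 :
    Irreducible (X ^ 7 + C (867 : ℚ) * X ^ 5 + C (68 : ℚ)) ∧
    ∀ (K : Type) [Field K] [NumberField K] (θ : K),
      θ ^ 7 + 867 * θ ^ 5 + 68 = 0 → Algebra.adjoin ℚ {θ} = ⊤ →
      ¬ ∃ η : 𝓞 K, Algebra.adjoin ℤ {η} = ⊤ := by
  refine ⟨aux_irr, ?_⟩
  rintro K _ _ θ h ht ⟨η, hη⟩
  have hθ : IsIntegral ℤ θ := by
    refine ⟨X ^ 7 + C (867 : ℤ) * X ^ 5 + C (68 : ℤ), by monicity!, ?_⟩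
    simpa using h
  let t : 𝓞 K := ⟨θ, hθ⟩
  let a : 𝓞 K := ⟨_, aux_int K θ h⟩
  have ha : 2 * a = t ^ 4 - t ^ 3 := by
    apply RingOfIntegers.ext
    simp only [map_mul, map_sub, map_pow, map_ofNat]
    change 2 * ((θ ^ 4 - θ ^ 3) / 2) = θ ^ 4 - θ ^ 3
    ring
  have key : ∀ φ₁ φ₂ : 𝓞 K →+* ZMod 2, φ₁ η = φ₂ η → ∀ x, φ₁ x = φ₂ x := by
    intro φ₁ φ₂ he x
    have : φ₁.toIntAlgHom = φ₂.toIntAlgHom :=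
      AlgHom.ext_of_adjoin_eq_top hη (by intro y hy; rw [Set.mem_singleton_iff.1 hy]; exact he)
    exact DFunLike.congr_fun this x
  have h20 : (2 : ZMod 2) = 0 := rfl
  have two_ne : (2 : ℤ_[2]) ≠ 0 := by norm_num
  obtain ⟨φ₃, h3⟩ := aux_third K θ h ht t rfl
  obtain ⟨z₁, b₁, hz₁, hb₁⟩ := aux_hensel 1 (Or.inl rfl)
  obtain ⟨z₂, b₂, hz₂, hb₂⟩ := aux_hensel 3 (Or.inr rfl)
  obtain ⟨ψ₁, hψ₁⟩ := aux_hom_s14 K θ h ht z₁ hz₁ t rfl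
  obtain ⟨ψ₂, hψ₂⟩ := aux_hom_s14 K θ h ht z₂ hz₂ t rfl
  have e1 : ψ₁ a = z₁ ^ 3 * (2 * b₁) := by
    have := congrArg ψ₁ ha
    simp only [map_mul, map_sub, map_pow, map_ofNat, hψ₁] at this
    apply mul_left_cancel₀ two_ne
    rw [this]
    push_cast at hb₁
    linear_combination z₁ ^ 3 * hb₁
  have e2 : ψ₂ a = z₂ ^ 3 * (1 + 2 * b₂) := by
    have := congrArg ψ₂ ha
    simp only [map_mul, map_sub, map_pow, map_ofNat, hψ₂] at this
    apply mul_left_cancel₀ two_ne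
    rw [this]
    push_cast at hb₂
    linear_combination z₂ ^ 3 * hb₂
  let π : ℤ_[2] →+* ZMod 2 := PadicInt.toZMod
  have h40 : (4 : ZMod 2) = 0 := rfl
  have h31 : (3 : ZMod 2) = 1 := rfl
  have p1 : π z₁ = 1 := by rw [hb₁]; simp [map_ofNat, h40]
  have p2 : π z₂ = 1 := by rw [hb₂]; simp [map_ofNat, h40, h31]
  have q1 : π (ψ₁ a) = 0 := by rw [e1]; simp [map_ofNat, h20]
  have q2 : π (ψ₂ a) = 1 := by rw [e2]; simp [map_ofNat, h20, p2]
  have k12 := key (π.comp ψ₁) (π.comp ψ₂)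
  have k13 := key (π.comp ψ₁) φ₃
  have k23 := key (π.comp ψ₂) φ₃
  have pig : ∀ x y w : ZMod 2, x = y ∨ x = w ∨ y = w := by decide
  rcases pig (π.comp ψ₁ η) (π.comp ψ₂ η) (φ₃ η) with e | e | e
  · have := k12 e a
    simp [q1, q2] at this
  · have := k13 e t
    simp [hψ₁, p1, h3] at this
  · have := k23 e t
    simp [hψ₂, p2, h3] at this
end
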